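/- Let V₁, V₂: ℝ → [0,∞) be Orlicz functions with V₁(x)/V₂(x) → ∞ as |x| → ∞, fix R ∈ (0,∞) and k ∈ ℕ, and let ν* be the unique maximizer of { h(ν) : m_{V₁}(ν) ≤ 1, m_{V₂}(ν) ∈ [0,R] }. For n ∈ ℕ let X₁^{n,V₁} be uniformly distributed on B_1^{n,V₁}. Then the law of (X₁^{n,V₁}(1), …, X₁^{n,V₁}(k)) conditioned on the event { (1/n) Σ_{i=1}^n V₂(X₁^{n,V₁}(i)) ≤ R + ε } converges weakly, as n → ∞ followed by ε → 0, to the k-fold product measure ν*^{⊗k}. -/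

import Mathlib

open MeasureTheory Real Filter Topology ENNReal Classical

noncomputable section

/-- An Orlicz function: convex, symmetric, vanishing only at `0`, nonnegative. -/
def IsOrlicz (V : ℝ → ℝ) : Prop :=
  ConvexOn ℝ Set.univ V ∧ (∀ x, V (-x) = V x) ∧ V 0 = 0 ∧ (∀ x, x ≠ 0 → 0 < V x) ∧
    (∀ x, 0 ≤ V x)

/-- The Orlicz ball `B_R^{n,V} = {x ∈ ℝⁿ : ∑ V(x_k) ≤ R n}`. -/
def OrliczBall (V : ℝ → ℝ) (R : ℝ) (n : ℕ) : Set (Fin n → ℝ) :=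
  {x | ∑ i, V (x i) ≤ R * n}

/-- The uniform distribution on the Orlicz ball (normalized Lebesgue measure). -/
def unifBall (V : ℝ → ℝ) (R : ℝ) (n : ℕ) : Measure (Fin n → ℝ) :=
  (volume (OrliczBall V R n))⁻¹ • volume.restrict (OrliczBall V R n)

/-- The `V`-moment `m_V(μ) = ∫ V dμ`, as a lower integral in `[0,∞]`. -/
def mV (V : ℝ → ℝ) (μ : Measure ℝ) : ℝ≥0∞ := ∫⁻ x, ENNReal.ofReal (V x) ∂μ

/-- Differential entropy `h(ν) = -∫ log(dν/dx) dν`, valued in `EReal`, with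
`h(ν) = ⊥` when `ν` is not absolutely continuous (or the integral does not exist). -/
def diffEnt (ν : Measure ℝ) : EReal :=
  if ν ≪ volume ∧ Integrable (fun x => Real.log (ν.rnDeriv volume x).toReal) ν
  then ((-(∫ x, Real.log (ν.rnDeriv volume x).toReal ∂ν) : ℝ) : EReal) else ⊥

/-- Projection onto the first `k` coordinates. -/
def proj (k n : ℕ) (x : Fin n → ℝ) : Fin k → ℝ :=
  fun i => if h : (i : ℕ) < n then x ⟨i, h⟩ else 0

/-- The measure on `ℝ` with Lebesgue density `f`. -/
def densMeas (f : ℝ → ℝ) : Measure ℝ := volume.withDensity fun x => ENNReal.ofReal (f x)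

/-- Probability densities on `ℝ` with finite differential entropy. -/
structure IsEntDensity (f : ℝ → ℝ) : Prop where
  meas : Measurable f
  nonneg : ∀ x, 0 ≤ f x
  integrable : Integrable f
  integral_eq : ∫ x, f x = 1
  ent : Integrable fun x => f x * Real.log (f x)

namespace IsEntDensity

variable {f g : ℝ → ℝ}

lemma lintegral_eq (hf : IsEntDensity f) : ∫⁻ x, ENNReal.ofReal (f x) = 1 := by
  rw [← ofReal_integral_eq_lintegral_ofReal hf.integrable (ae_of_all _ hf.nonneg), hf.integral_eq,
    ENNReal.ofReal_one]

lemma isProbabilityMeasure (hf : IsEntDensity f) : IsProbabilityMeasure (densMeas f) :=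
  ⟨by rw [densMeas, withDensity_apply _ MeasurableSet.univ, Measure.restrict_univ, hf.lintegral_eq]⟩

lemma integrable_densMeas_iff (hf : IsEntDensity f) (φ : ℝ → ℝ) :
    Integrable φ (densMeas f) ↔ Integrable fun x => f x * φ x := by
  rw [densMeas, integrable_withDensity_iff_integrable_smul' hf.meas.ennreal_ofReal
    (ae_of_all _ fun _ => ENNReal.ofReal_lt_top)]
  simp only [ENNReal.toReal_ofReal (hf.nonneg _), smul_eq_mul]

lemma integral_densMeas (hf : IsEntDensity f) (φ : ℝ → ℝ) :
    ∫ x, φ x ∂densMeas f = ∫ x, f x * φ x := by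
  rw [densMeas, integral_withDensity_eq_integral_toReal_smul hf.meas.ennreal_ofReal
    (ae_of_all _ fun _ => ENNReal.ofReal_lt_top)]
  simp only [ENNReal.toReal_ofReal (hf.nonneg _), smul_eq_mul]

lemma integrable_log (hf : IsEntDensity f) : Integrable (fun x => Real.log (f x)) (densMeas f) :=
  (hf.integrable_densMeas_iff _).2 hf.ent

lemma ae_pos (hf : IsEntDensity f) : ∀ᵐ x ∂densMeas f, 0 < f x := by
  rw [densMeas, ae_withDensity_iff hf.meas.ennreal_ofReal]
  refine ae_of_all _ fun x hx => ?_
  simpa using hx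

lemma diffEnt_eq (hf : IsEntDensity f) :
    diffEnt (densMeas f) = ((-∫ x, Real.log (f x) ∂densMeas f : ℝ) : EReal) := by
  have hac : densMeas f ≪ volume := withDensity_absolutelyContinuous _ _
  have h : (fun x => Real.log ((densMeas f).rnDeriv volume x).toReal) =ᵐ[densMeas f]
      fun x => Real.log (f x) := by
    have := hac.ae_le (Measure.rnDeriv_withDensity volume hf.meas.ennreal_ofReal)
    filter_upwards [this] with x hx
    rw [densMeas, hx, ENNReal.toReal_ofReal (hf.nonneg x)]
  rw [diffEnt, if_pos ⟨hac, (integrable_congr h).2 hf.integrable_log⟩, integral_congr_ae h]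

/-- Gibbs' inequality. -/
lemma gibbs (hf : IsEntDensity f) (hg : IsEntDensity g) (hfg : ∀ x, g x = 0 → f x = 0)
    (hi : Integrable (fun x => Real.log (g x)) (densMeas f)) :
    ∫ x, Real.log (g x) ∂densMeas f ≤ ∫ x, Real.log (f x) ∂densMeas f := by
  have hi' := (hf.integrable_densMeas_iff _).1 hi
  have key : ∫ x, (f x * Real.log (g x) - f x * Real.log (f x)) ≤ ∫ x, (g x - f x) := by
    refine integral_mono (hi'.sub hf.ent) (hg.integrable.sub hf.integrable) fun x => ?_
    have hf0 := hf.nonneg x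
    have hg0 := hg.nonneg x
    rcases hf0.eq_or_lt with h | h
    · simp [← h, hg0]
    rcases hg0.eq_or_lt with h' | h'
    · exact absurd (hfg x h'.symm) h.ne'
    · have := Real.log_le_sub_one_of_pos (div_pos h' h)
      rw [Real.log_div h'.ne' h.ne'] at this
      have h2 := mul_le_mul_of_nonneg_left this hf0
      have h3 : f x * (g x / f x - 1) = g x - f x := by field_simp
      simp only
      linarith
  rw [integral_sub hi' hf.ent, integral_sub hg.integrable hf.integrable, hf.integral_eq,
    hg.integral_eq] at key
  rw [hf.integral_densMeas, hf.integral_densMeas]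
  linarith


lemma integrable_const_mul_mul_log (hf : IsEntDensity f) {a : ℝ} (ha : 0 < a) :
    Integrable fun x => (a * f x) * Real.log (a * f x) := by
  have : (fun x => (a * f x) * Real.log (a * f x)) =
      fun x => (a * Real.log a) * f x + a * (f x * Real.log (f x)) := by
    ext x
    rcases (hf.nonneg x).eq_or_lt with h | h
    · simp [← h]
    · rw [Real.log_mul ha.ne' h.ne']; ring
  rw [this]
  exact (hf.integrable.const_mul _).add (hf.ent.const_mul _)

lemma mix_mul_log_le (hf : IsEntDensity f) (hg : IsEntDensity g) {a b : ℝ} (ha : 0 < a) (hb : 0 < b)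
    (hab : a + b = 1) (x : ℝ) : (a * f x + b * g x) * Real.log (a * f x + b * g x) ≤
      a * (f x * Real.log (f x)) + b * (g x * Real.log (g x)) := by
  have := Real.convexOn_mul_log.2 (hf.nonneg x) (hg.nonneg x) ha.le hb.le hab
  simpa only [smul_eq_mul] using this

/-- A mixture of densities with finite entropy has finite entropy. -/
lemma mix (hf : IsEntDensity f) (hg : IsEntDensity g) {a b : ℝ} (ha : 0 < a) (hb : 0 < b)
    (hab : a + b = 1) : IsEntDensity fun x => a * f x + b * g x where
  meas := (hf.meas.const_mul a).add (hg.meas.const_mul b)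
  nonneg x := add_nonneg (mul_nonneg ha.le (hf.nonneg x)) (mul_nonneg hb.le (hg.nonneg x))
  integrable := (hf.integrable.const_mul a).add (hg.integrable.const_mul b)
  integral_eq := by
    rw [integral_add (hf.integrable.const_mul a) (hg.integrable.const_mul b), integral_const_mul,
      integral_const_mul, hf.integral_eq, hg.integral_eq]
    linarith
  ent := by
    have hm : Measurable fun x => a * f x + b * g x :=
      (hf.meas.const_mul a).add (hg.meas.const_mul b)
    refine integrable_of_le_of_le (hm.mul (Real.measurable_log.comp hm)).aestronglyMeasurable
      (ae_of_all _ fun x => ?_) (ae_of_all _ fun x => mix_mul_log_le hf hg ha hb hab x)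
      ((hf.integrable_const_mul_mul_log ha).add (hg.integrable_const_mul_mul_log hb))
      ((hf.ent.const_mul a).add (hg.ent.const_mul b))
    have key : ∀ u v : ℝ, 0 ≤ u → 0 ≤ v → u * Real.log u ≤ u * Real.log (u + v) := by
      intro u v hu hv
      rcases hu.eq_or_lt with h | h
      · simp [← h]
      · exact mul_le_mul_of_nonneg_left (Real.log_le_log h (by linarith)) hu
    have hu := mul_nonneg ha.le (hf.nonneg x)
    have hv := mul_nonneg hb.le (hg.nonneg x)
    have h1 := key _ _ hu hv
    have h2 := key _ _ hv hu
    rw [add_comm (b * g x)] at h2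
    simp only [Pi.add_apply]
    rw [add_mul]
    exact add_le_add h1 h2

lemma densMeas_mix (hf : IsEntDensity f) (hg : IsEntDensity g) {a b : ℝ} (ha : 0 ≤ a)
    (hb : 0 ≤ b) : densMeas (fun x => a * f x + b * g x) =
      ENNReal.ofReal a • densMeas f + ENNReal.ofReal b • densMeas g := by
  rw [densMeas, densMeas, densMeas, ← withDensity_smul _ hf.meas.ennreal_ofReal,
    ← withDensity_smul _ hg.meas.ennreal_ofReal,
    ← withDensity_add_left (hf.meas.ennreal_ofReal.const_smul _)]
  congr 1
  ext x
  simp only [Pi.add_apply, Pi.smul_apply, smul_eq_mul]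
  rw [ENNReal.ofReal_add (mul_nonneg ha (hf.nonneg x)) (mul_nonneg hb (hg.nonneg x)),
    ENNReal.ofReal_mul ha, ENNReal.ofReal_mul hb]

/-- Concavity of the differential entropy. -/
lemma integral_log_mix_le (hf : IsEntDensity f) (hg : IsEntDensity g) {a b : ℝ} (ha : 0 < a)
    (hb : 0 < b) (hab : a + b = 1) :
    ∫ x, Real.log (a * f x + b * g x) ∂densMeas (fun x => a * f x + b * g x) ≤
      a * ∫ x, Real.log (f x) ∂densMeas f + b * ∫ x, Real.log (g x) ∂densMeas g := by
  have hm := hf.mix hg ha hb hab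
  rw [hm.integral_densMeas, hf.integral_densMeas, hg.integral_densMeas, ← integral_const_mul,
    ← integral_const_mul, ← integral_add (hf.ent.const_mul a) (hg.ent.const_mul b)]
  exact integral_mono hm.ent ((hf.ent.const_mul a).add (hg.ent.const_mul b))
    fun x => mix_mul_log_le hf hg ha hb hab x

end IsEntDensity

/-- An absolutely continuous probability measure is given by its Radon-Nikodym density. -/
lemma eq_densMeas_rnDeriv (ν : Measure ℝ) [IsProbabilityMeasure ν] (hac : ν ≪ volume) :
    ν = densMeas fun x => (ν.rnDeriv volume x).toReal := by
  conv_lhs => rw [← Measure.withDensity_rnDeriv_eq ν volume hac]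
  refine withDensity_congr_ae ?_
  filter_upwards [ν.rnDeriv_lt_top volume] with x hx
  rw [ENNReal.ofReal_toReal hx.ne]

/-- A measure of finite differential entropy has a density of finite entropy. -/
lemma exists_isEntDensity_of_diffEnt_ne_bot (ν : Measure ℝ) [IsProbabilityMeasure ν]
    (h : diffEnt ν ≠ ⊥) : ∃ f, IsEntDensity f ∧ ν = densMeas f := by
  rw [diffEnt] at h
  split_ifs at h with hc
  · obtain ⟨hac, hi⟩ := hc
    have hν := eq_densMeas_rnDeriv ν hac
    refine ⟨_, ⟨(Measure.measurable_rnDeriv _ _).ennreal_toReal, fun _ => ENNReal.toReal_nonneg,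
      Measure.integrable_toReal_rnDeriv, ?_, ?_⟩, hν⟩
    · rw [Measure.integral_toReal_rnDeriv hac, probReal_univ]
    · rw [hν, densMeas, integrable_withDensity_iff_integrable_smul'
        (Measure.measurable_rnDeriv _ _).ennreal_toReal.ennreal_ofReal
        (ae_of_all _ fun _ => ENNReal.ofReal_lt_top), ← densMeas, ← hν] at hi
      simpa only [ENNReal.toReal_ofReal ENNReal.toReal_nonneg, smul_eq_mul] using hi
  · exact absurd rfl h

/-- A probability measure with bounded density supported on a set of finite volume has finite
entropy. -/
lemma exists_isEntDensity_of_le (ν : Measure ℝ) [IsProbabilityMeasure ν] {S : Set ℝ}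
    (hS : MeasurableSet S) (hS' : volume S ≠ ∞) {C : ℝ≥0∞} (hC : C ≠ ∞)
    (h : ν ≤ C • volume.restrict S) : ∃ f, IsEntDensity f ∧ ν = densMeas f := by
  have hac : ν ≪ volume :=
    (Measure.absolutelyContinuous_of_le h).trans
      (Measure.smul_absolutelyContinuous.trans Measure.absolutelyContinuous_restrict)
  set f : ℝ → ℝ := fun x => (ν.rnDeriv volume x).toReal with hf
  have hfm : Measurable f := (Measure.measurable_rnDeriv _ _).ennreal_toReal
  have hν : ν = densMeas f := eq_densMeas_rnDeriv ν hac
  have hle : ∀ᵐ x, ν.rnDeriv volume x ≤ S.indicator (fun _ => C) x := by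
    refine ae_le_of_forall_setLIntegral_le_of_sigmaFinite (Measure.measurable_rnDeriv _ _)
      fun s hs _ => ?_
    refine (Measure.setLIntegral_rnDeriv_le s).trans ((h s).trans_eq ?_)
    rw [setLIntegral_indicator hS, setLIntegral_const, Measure.smul_apply, Measure.restrict_apply hs,
      Set.inter_comm, smul_eq_mul]
  refine ⟨f, ⟨hfm, fun _ => ENNReal.toReal_nonneg, Measure.integrable_toReal_rnDeriv, ?_, ?_⟩, hν⟩
  · rw [Measure.integral_toReal_rnDeriv hac, probReal_univ]
  · have hbd : ∀ c : ℝ, Integrable (S.indicator fun _ => c) := fun c =>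
      (integrable_indicator_iff hS).2 (integrableOn_const hS')
    refine integrable_of_le_of_le (hfm.mul (Real.measurable_log.comp hfm)).aestronglyMeasurable
      ?_ ?_ (hbd (-1)) (hbd (C.toReal ^ 2))
    all_goals
      filter_upwards [hle] with x hx
      have hf0 : 0 ≤ f x := ENNReal.toReal_nonneg
      by_cases hxS : x ∈ S
      · simp only [Set.indicator_of_mem hxS] at hx ⊢
        have hfC : f x ≤ C.toReal := ENNReal.toReal_mono hC hx
        rcases hf0.eq_or_lt with h0 | h0
        · rw [← h0]; simp
        have h1 := mul_le_mul_of_nonneg_left (Real.one_sub_inv_le_log_of_pos h0) hf0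
        have h2 := mul_le_mul_of_nonneg_left (Real.log_le_sub_one_of_pos h0) hf0
        rw [mul_sub, mul_inv_cancel₀ h0.ne'] at h1
        nlinarith
      · simp only [Set.indicator_of_notMem hxS, nonpos_iff_eq_zero] at hx ⊢
        have : f x = 0 := by simp [hf, hx]
        simp [this]

lemma pi_densMeas {f : ℝ → ℝ} (hf : IsEntDensity f) (n : ℕ) :
    Measure.pi (fun _ : Fin n => densMeas f) =
      (volume : Measure (Fin n → ℝ)).withDensity fun x => ∏ i, ENNReal.ofReal (f (x i)) := by
  have := hf.isProbabilityMeasure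
  refine Measure.pi_eq fun s hs => ?_
  rw [withDensity_apply _ (MeasurableSet.univ_pi hs), ← lintegral_indicator (MeasurableSet.univ_pi hs)]
  have h0 : ∀ i x, 0 ≤ (s i).indicator f x := fun i x => Set.indicator_nonneg (fun x _ => hf.nonneg x) x
  have hi : ∀ i, Integrable ((s i).indicator f) := fun i => hf.integrable.indicator (hs i)
  have h1 : ∀ x : Fin n → ℝ, (Set.univ.pi s).indicator (fun x => ∏ i, ENNReal.ofReal (f (x i))) x =
      ENNReal.ofReal (∏ i, (s i).indicator f (x i)) := by
    intro x
    rw [ENNReal.ofReal_prod_of_nonneg fun i _ => h0 i _]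
    by_cases hx : x ∈ Set.univ.pi s
    · rw [Set.indicator_of_mem hx]
      exact Finset.prod_congr rfl fun i _ => by rw [Set.indicator_of_mem (hx i trivial)]
    · rw [Set.indicator_of_notMem hx]
      simp only [Set.mem_pi, Set.mem_univ, true_imp_iff, not_forall] at hx
      obtain ⟨i, hi⟩ := hx
      exact (Finset.prod_eq_zero (Finset.mem_univ i)
        (by rw [Set.indicator_of_notMem hi, ENNReal.ofReal_zero])).symm
  simp_rw [h1]
  rw [volume_pi, ← ofReal_integral_eq_lintegral_ofReal (Integrable.fintype_prod hi)
    (ae_of_all _ fun x => Finset.prod_nonneg fun i _ => h0 i _),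
    integral_fintype_prod_eq_prod, ENNReal.ofReal_prod_of_nonneg
      fun i _ => integral_nonneg (h0 i)]
  refine Finset.prod_congr rfl fun i _ => ?_
  rw [ofReal_integral_eq_lintegral_ofReal (hi i) (ae_of_all _ (h0 i)), densMeas,
    withDensity_apply _ (hs i), ← lintegral_indicator (hs i)]
  congr 1 with x
  by_cases hx : x ∈ s i <;> simp [hx]

/-- Disjoint blocks of coordinates of an i.i.d. vector are i.i.d. -/
lemma lintegral_pi_prod_blocks (μ : Measure ℝ) [IsProbabilityMeasure μ] {n M k : ℕ}
    (e : Fin M × Fin k ↪ Fin n) {u : (Fin k → ℝ) → ℝ≥0∞} (hu : Measurable u) :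
    ∫⁻ x, ∏ j, u (fun i => x (e (j, i))) ∂Measure.pi (fun _ : Fin n => μ) =
      (∫⁻ y, u y ∂Measure.pi fun _ : Fin k => μ) ^ M := by
  have h1 : (Measure.pi fun _ : Fin n => μ).map
      (fun x => MeasurableEquiv.curry (Fin M) (Fin k) ℝ fun p => x (e p)) =
      Measure.infinitePi fun _ : Fin M => Measure.pi fun _ : Fin k => μ := by
    rw [← Measure.infinitePi_eq_pi, ← Measure.infinitePi_eq_pi,
      ← Measure.infinitePi_map_curry (fun _ : Fin M => fun _ : Fin k => μ),
      ← Measure.map_infinitePi_infinitePi_of_inj (P := fun _ : Fin n => μ) e.injective,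
      Measure.map_map (by fun_prop) (by fun_prop)]
    rfl
  have hm : Measurable fun z : Fin M → Fin k → ℝ => ∏ j, u (z j) := by fun_prop
  have h2 := lintegral_map (μ := Measure.pi fun _ : Fin n => μ)
    (g := fun x : Fin n → ℝ => MeasurableEquiv.curry (Fin M) (Fin k) ℝ fun p => x (e p)) hm
    (by fun_prop)
  rw [h1] at h2
  refine Eq.trans h2.symm ?_
  rw [ProbabilityTheory.lintegral_prod_eq_prod_lintegral_of_indepFun Finset.univ
    (fun j (z : Fin M → Fin k → ℝ) => u (z j))
    (ProbabilityTheory.iIndepFun_infinitePi (fun _ => hu)) (fun j => by fun_prop)]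
  have : ∀ j : Fin M, ∫⁻ z, u (z j) ∂(Measure.infinitePi fun _ : Fin M => Measure.pi fun _ : Fin k => μ) =
      ∫⁻ y, u y ∂Measure.pi fun _ : Fin k => μ := fun j =>
    (measurePreserving_eval_infinitePi (fun _ : Fin M => Measure.pi fun _ : Fin k => μ)
      j).lintegral_comp hu
  simp [this]

lemma prod_apply_le_add {α β : Type*} [MeasurableSpace α] [MeasurableSpace β]
    {μ₁ ν₁ : Measure α} {μ₂ ν₂ : Measure β} [IsProbabilityMeasure μ₁] [IsProbabilityMeasure ν₁]
    [IsProbabilityMeasure μ₂] [IsProbabilityMeasure ν₂] {a b : ℝ≥0∞}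
    (h₁ : ∀ B, MeasurableSet B → μ₁ B ≤ ν₁ B + a) (h₂ : ∀ B, MeasurableSet B → μ₂ B ≤ ν₂ B + b)
    {B : Set (α × β)} (hB : MeasurableSet B) : μ₁.prod μ₂ B ≤ ν₁.prod ν₂ B + (a + b) := by
  calc μ₁.prod μ₂ B = ∫⁻ x, μ₂ (Prod.mk x ⁻¹' B) ∂μ₁ := Measure.prod_apply hB
    _ ≤ ∫⁻ x, (ν₂ (Prod.mk x ⁻¹' B) + b) ∂μ₁ :=
        lintegral_mono fun x => h₂ _ (measurable_prodMk_left hB)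
    _ = μ₁.prod ν₂ B + b := by
        rw [lintegral_add_right _ measurable_const, lintegral_const, measure_univ, mul_one,
          Measure.prod_apply hB]
    _ = ∫⁻ y, μ₁ ((fun x => (x, y)) ⁻¹' B) ∂ν₂ + b := by rw [Measure.prod_apply_symm hB]
    _ ≤ ∫⁻ y, (ν₁ ((fun x => (x, y)) ⁻¹' B) + a) ∂ν₂ + b := by
        gcongr with y
        exact h₁ _ (measurable_prodMk_right hB)
    _ = ν₁.prod ν₂ B + (a + b) := by
        rw [lintegral_add_right _ measurable_const, lintegral_const, measure_univ, mul_one,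
          Measure.prod_apply_symm hB, add_assoc]

lemma pi_apply_le_add {μ ν : Measure ℝ} [IsProbabilityMeasure μ] [IsProbabilityMeasure ν]
    {a : ℝ≥0∞} (h : ∀ B, MeasurableSet B → μ B ≤ ν B + a) (k : ℕ) :
    ∀ B, MeasurableSet B → Measure.pi (fun _ : Fin k => μ) B ≤
      Measure.pi (fun _ : Fin k => ν) B + k * a := by
  induction k with
  | zero =>
    intro B _
    rw [Measure.pi_of_empty _ 0, Measure.pi_of_empty _ 0]
    exact le_self_add
  | succ k ih =>
    intro B hB
    have hμ := (measurePreserving_piFinSuccAbove (fun _ : Fin (k + 1) => μ) 0).symm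
    have hν := (measurePreserving_piFinSuccAbove (fun _ : Fin (k + 1) => ν) 0).symm
    rw [← hμ.measure_preimage hB.nullMeasurableSet, ← hν.measure_preimage hB.nullMeasurableSet]
    refine (prod_apply_le_add h ih (hμ.measurable hB)).trans_eq ?_
    push_cast
    ring

/-- Conditioning Lebesgue measure on a permutation invariant set gives an exchangeable law. -/
lemma map_cond_comp_embedding_eq {n k : ℕ} {K : Set (Fin n → ℝ)} (hK : MeasurableSet K)
    (hsymm : ∀ (σ : Equiv.Perm (Fin n)) x, x ∘ σ ∈ K ↔ x ∈ K) (ι ι' : Fin k ↪ Fin n) :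
    (ProbabilityTheory.cond volume K).map (fun x i => x (ι i)) =
      (ProbabilityTheory.cond volume K).map (fun x i => x (ι' i)) := by
  have := Equiv.Perm.isMultiplyPretransitive (Fin n) k
  obtain ⟨σ, hσ⟩ := MulAction.exists_smul_eq (Equiv.Perm (Fin n)) ι ι'
  have hσ' : ∀ i, σ (ι i) = ι' i := fun i => by rw [← hσ]; rfl
  have hmp : MeasurePreserving (fun x : Fin n → ℝ => x ∘ σ) volume volume :=
    (volume_measurePreserving_piCongrLeft (fun _ : Fin n => ℝ) σ).symm
  have hc : MeasurePreserving (fun x : Fin n → ℝ => x ∘ σ) (ProbabilityTheory.cond volume K)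
      (ProbabilityTheory.cond volume K) := by
    have h := hmp.restrict_preimage hK
    have hpre : (fun x : Fin n → ℝ => x ∘ σ) ⁻¹' K = K := Set.ext fun x => hsymm σ x
    rw [hpre] at h
    exact h.smul_measure _
  conv_lhs => rw [← hc.map_eq]
  rw [Measure.map_map (by fun_prop) hc.measurable]
  congr 1
  ext x i
  simp [hσ']

/-- Jensen's inequality for the uniform distribution on `K`: the mean of the logarithm of a
subprobability density is at most minus the logarithm of the volume. -/
lemma integral_cond_le_neg_log {α : Type*} [MeasurableSpace α] {μ : Measure α} {K : Set α}
    (h0 : μ K ≠ 0) (h1 : μ K ≠ ∞) {T : α → ℝ} (hTm : Measurable T)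
    (hT : Integrable T (ProbabilityTheory.cond μ K))
    (hexp : ∫⁻ x in K, ENNReal.ofReal (Real.exp (T x)) ∂μ ≤ 1) :
    ∫ x, T x ∂ProbabilityTheory.cond μ K ≤ -Real.log (μ K).toReal := by
  have : IsProbabilityMeasure (ProbabilityTheory.cond μ K) :=
    ProbabilityTheory.cond_isProbabilityMeasure_of_finite h0 h1
  set v := (μ K).toReal
  have hv : 0 < v := ENNReal.toReal_pos h0 h1
  have hle : ∫⁻ x, ENNReal.ofReal (Real.exp (T x)) ∂ProbabilityTheory.cond μ K ≤
      ENNReal.ofReal v⁻¹ := by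
    rw [ProbabilityTheory.cond, lintegral_smul_measure, ENNReal.ofReal_inv_of_pos hv,
      ENNReal.ofReal_toReal h1, smul_eq_mul]
    exact mul_le_of_le_one_right' hexp
  have hei : Integrable (fun x => Real.exp (T x)) (ProbabilityTheory.cond μ K) :=
    ⟨(Real.measurable_exp.comp hTm).aestronglyMeasurable, by
      rw [hasFiniteIntegral_iff_ofReal (ae_of_all _ fun _ => (Real.exp_pos _).le)]
      exact hle.trans_lt ENNReal.ofReal_lt_top⟩
  have hee : ∫ x, Real.exp (T x) ∂ProbabilityTheory.cond μ K ≤ v⁻¹ := by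
    rw [integral_eq_lintegral_of_nonneg_ae (ae_of_all _ fun _ => (Real.exp_pos _).le)
      hei.aestronglyMeasurable]
    exact ENNReal.toReal_le_of_le_ofReal (inv_nonneg.2 hv.le) hle
  calc ∫ x, T x ∂ProbabilityTheory.cond μ K
      ≤ ∫ x, (v * Real.exp (T x) - (1 + Real.log v)) ∂ProbabilityTheory.cond μ K := by
        refine integral_mono hT ((hei.const_mul v).sub (integrable_const _)) fun x => ?_
        have := Real.log_le_sub_one_of_pos (mul_pos hv (Real.exp_pos (T x)))
        rw [Real.log_mul hv.ne' (Real.exp_pos _).ne', Real.log_exp] at this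
        simp only
        linarith
    _ = v * ∫ x, Real.exp (T x) ∂ProbabilityTheory.cond μ K - (1 + Real.log v) := by
        rw [integral_sub (hei.const_mul v) (integrable_const _), integral_const_mul,
          integral_const, probReal_univ, one_smul]
    _ ≤ v * v⁻¹ - (1 + Real.log v) := by gcongr
    _ = -Real.log v := by rw [mul_inv_cancel₀ hv.ne']; ring

/-- Entropy comparison of the uniform distribution on `K` with an exponential tilt of the product
measure `m^{⊗n}`, bounding the excess mass of a block marginal over `m^{⊗k}`. -/
lemma block_marginal_excess_le {n k M : ℕ} {K : Set (Fin n → ℝ)}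
    (h0 : volume K ≠ 0) (h1 : volume K ≠ ∞) {m : ℝ → ℝ} (hm : IsEntDensity m)
    (e : Fin M × Fin k ↪ Fin n) {g : Measure ℝ}
    (hg : ∀ i, (ProbabilityTheory.cond volume K).map (fun x => x i) = g)
    (hgi : Integrable (fun x => Real.log (m x)) g) (hgpos : ∀ᵐ x ∂g, 0 < m x)
    {G : Measure (Fin k → ℝ)}
    (hG : ∀ j, (ProbabilityTheory.cond volume K).map (fun x i => x (e (j, i))) = G)
    {B : Set (Fin k → ℝ)} (hB : MeasurableSet B) {s : ℝ} (hs : 0 < s) (hs1 : s ≤ 1) :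
    M * (s * (G.real B - (Measure.pi fun _ : Fin k => densMeas m).real B)) ≤
      n * (-∫ x, Real.log (m x) ∂g) - Real.log (volume K).toReal + M * s ^ 2 := by
  have := hm.isProbabilityMeasure
  set P := ProbabilityTheory.cond volume K with hP
  have : IsProbabilityMeasure P := ProbabilityTheory.cond_isProbabilityMeasure_of_finite h0 h1
  set Q := Measure.pi fun _ : Fin k => densMeas m with hQ
  set b := Q.real B with hb
  have hb0 : 0 ≤ b := measureReal_nonneg
  have hb1 : b ≤ 1 := measureReal_le_one
  have hes : 0 ≤ Real.exp s - 1 := by linarith [Real.add_one_le_exp s]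
  set Z := 1 + (Real.exp s - 1) * b with hZ
  have hZ1 : 1 ≤ Z := by nlinarith [mul_nonneg hes hb0]
  have hZ0 : 0 < Z := by linarith
  set u : (Fin k → ℝ) → ℝ := fun y => B.indicator (fun _ => s) y with hu
  have hum : Measurable u := measurable_const.indicator hB
  have hZu : ∫⁻ y, ENNReal.ofReal (Real.exp (u y)) ∂Q = ENNReal.ofReal Z := by
    have : ∀ y, ENNReal.ofReal (Real.exp (u y)) =
        1 + B.indicator (fun _ => ENNReal.ofReal (Real.exp s - 1)) y := by
      intro y
      by_cases hy : y ∈ B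
      · simp only [hu, Set.indicator_of_mem hy]
        rw [← ENNReal.ofReal_one, ← ENNReal.ofReal_add zero_le_one hes]
        congr 1; ring
      · simp [hu, hy]
    simp_rw [this]
    rw [lintegral_add_left measurable_const, lintegral_const, measure_univ, lintegral_indicator hB,
      setLIntegral_const, hZ, ENNReal.ofReal_add zero_le_one (mul_nonneg hes hb0),
      ENNReal.ofReal_mul hes, hb, ofReal_measureReal, ENNReal.ofReal_one, mul_one]
  set T : (Fin n → ℝ) → ℝ := fun x => ∑ i, Real.log (m (x i)) +
    ∑ j, u (fun i => x (e (j, i))) - M * Real.log Z with hT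
  have hlm : Measurable fun x => Real.log (m x) := Real.measurable_log.comp hm.meas
  have hTm : Measurable T := by
    refine ((Finset.measurable_fun_sum _ fun i _ => hlm.comp (measurable_pi_apply i)).add
      (Finset.measurable_fun_sum _ fun j _ => hum.comp ?_)).sub_const _
    fun_prop
  have hi1 : ∀ i, Integrable (fun x : Fin n → ℝ => Real.log (m (x i))) P := fun i => by
    have h := hg i ▸ hgi
    exact h.comp_measurable (measurable_pi_apply i)
  have hi2 : ∀ j, Integrable (fun x : Fin n → ℝ => u fun i => x (e (j, i))) P := fun j => by
    refine Integrable.of_bound (C := s) (hum.comp (by fun_prop)).aestronglyMeasurable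
      (ae_of_all _ fun x => ?_)
    by_cases hx : (fun i => x (e (j, i))) ∈ B <;> simp [hu, hx, abs_of_pos hs, hs.le]
  have hTi : Integrable T P :=
    ((integrable_finsetSum _ fun i _ => hi1 i).add (integrable_finsetSum _ fun j _ => hi2 j)).sub
      (integrable_const _)
  have hpos : ∀ᵐ x ∂volume.restrict K, ∀ i, 0 < m (x i) := by
    have hPpos : ∀ᵐ x ∂P, ∀ i, 0 < m (x i) := by
      refine ae_all_iff.2 fun i => ?_
      have h := hg i ▸ hgpos
      exact ae_of_ae_map (measurable_pi_apply i).aemeasurable h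
    rwa [hP, ProbabilityTheory.cond, ae_iff, Measure.smul_apply, smul_eq_mul, mul_eq_zero,
      or_iff_right (ENNReal.inv_ne_zero.2 h1), ← ae_iff] at hPpos
  have hexp : ∫⁻ x in K, ENNReal.ofReal (Real.exp (T x)) ≤ 1 := by
    have hpm : Measurable fun x : Fin n → ℝ => ∏ j, ENNReal.ofReal (Real.exp (u fun i => x (e (j, i)))) := by
      refine Finset.measurable_fun_prod _ fun j _ => ?_
      exact (Real.measurable_exp.comp (hum.comp (by fun_prop))).ennreal_ofReal
    have hpm' : Measurable fun x : Fin n → ℝ => ∏ i, ENNReal.ofReal (m (x i)) :=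
      Finset.measurable_fun_prod _ fun i _ => (hm.meas.comp (measurable_pi_apply i)).ennreal_ofReal
    have hae : ∀ᵐ x ∂volume.restrict K, ENNReal.ofReal (Real.exp (T x)) =
        (ENNReal.ofReal Z ^ M)⁻¹ * ((∏ i, ENNReal.ofReal (m (x i))) *
          ∏ j, ENNReal.ofReal (Real.exp (u fun i => x (e (j, i))))) := by
      filter_upwards [hpos] with x hx
      rw [hT]
      simp only
      rw [Real.exp_sub, Real.exp_add, Real.exp_sum, Real.exp_sum, ← Real.log_pow,
        Real.exp_log (pow_pos hZ0 _), div_eq_inv_mul, ENNReal.ofReal_mul (by positivity),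
        ENNReal.ofReal_inv_of_pos (by positivity), ENNReal.ofReal_pow hZ0.le,
        ENNReal.ofReal_mul (by positivity),
        ENNReal.ofReal_prod_of_nonneg (fun _ _ => (Real.exp_pos _).le),
        ENNReal.ofReal_prod_of_nonneg (fun _ _ => (Real.exp_pos _).le)]
      simp only [Real.exp_log (hx _)]
    rw [lintegral_congr_ae hae]
    refine (lintegral_mono' Measure.restrict_le_self le_rfl).trans ?_
    refine (lintegral_const_mul (μ := volume) (ENNReal.ofReal Z ^ M)⁻¹ (hpm'.mul hpm)).le.trans ?_
    have hblock := lintegral_pi_prod_blocks (densMeas m) e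
      (u := fun y => ENNReal.ofReal (Real.exp (u y))) (Real.measurable_exp.comp hum).ennreal_ofReal
    rw [pi_densMeas hm, lintegral_withDensity_eq_lintegral_mul _ hpm' hpm, ← hQ, hZu] at hblock
    refine (congrArg ((ENNReal.ofReal Z ^ M)⁻¹ * ·) hblock).le.trans ?_
    rw [ENNReal.inv_mul_cancel (by simp [hZ0]) (by simp)]
  have hmain := integral_cond_le_neg_log h0 h1 hTm hTi hexp
  have hTint : ∫ x, T x ∂P = n * ∫ x, Real.log (m x) ∂g + M * (s * G.real B) - M * Real.log Z := by
    have e1 : ∀ i, ∫ x, Real.log (m (x i)) ∂P = ∫ x, Real.log (m x) ∂g := fun i => by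
      rw [← hg i, integral_map (measurable_pi_apply i).aemeasurable hlm.aestronglyMeasurable]
    have e2 : ∀ j, ∫ x, u (fun i => x (e (j, i))) ∂P = s * G.real B := fun j => by
      have hj : Measurable fun (x : Fin n → ℝ) (i : Fin k) => x (e (j, i)) := by fun_prop
      rw [← integral_map (φ := fun (x : Fin n → ℝ) i => x (e (j, i))) hj.aemeasurable
        hum.aestronglyMeasurable, hG, hu, integral_indicator hB, setIntegral_const, smul_eq_mul,
        mul_comm]
    have h1 : Integrable (fun x : Fin n → ℝ => ∑ i, Real.log (m (x i))) P :=
      integrable_finsetSum _ fun i _ => hi1 i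
    have h2 : Integrable (fun x : Fin n → ℝ => ∑ j, u fun i => x (e (j, i))) P :=
      integrable_finsetSum _ fun j _ => hi2 j
    have h3 : Integrable (fun x : Fin n → ℝ => ∑ i, Real.log (m (x i)) +
      ∑ j, u fun i => x (e (j, i))) P := h1.add h2
    simp only [hT]
    rw [integral_sub h3 (integrable_const _), integral_add h1 h2,
      integral_finsetSum _ fun i _ => hi1 i, integral_finsetSum _ fun j _ => hi2 j]
    simp [e1, e2]
  have hlogZ : Real.log Z ≤ s * b + s ^ 2 := by
    have h2 := Real.log_le_sub_one_of_pos hZ0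
    have h3 := (abs_le.1 (Real.abs_exp_sub_one_sub_id_le (x := s) (by rwa [abs_of_pos hs]))).2
    nlinarith [mul_nonneg hs.le hs.le, mul_le_mul_of_nonneg_right h3 hb0,
      mul_le_mul_of_nonneg_left hb1 (sq_nonneg s)]
  have hM : (M : ℝ) * Real.log Z ≤ M * (s * b + s ^ 2) :=
    mul_le_mul_of_nonneg_left hlogZ (Nat.cast_nonneg M)
  rw [hTint] at hmain
  linarith

namespace IsOrlicz

variable {V : ℝ → ℝ}

lemma continuous (hV : IsOrlicz V) : Continuous V :=
  continuousOn_univ.1 (hV.1.continuousOn isOpen_univ)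

lemma abs_mul_le (hV : IsOrlicz V) {x : ℝ} (hx : 1 ≤ |x|) : |x| * V 1 ≤ V x := by
  have h0 : 0 < |x| := by linarith
  have habs : V |x| = V x := by
    rcases abs_choice x with h | h <;> rw [h]
    exact hV.2.1 x
  have h := hV.1.2 (Set.mem_univ |x|) (Set.mem_univ 0) (inv_nonneg.2 h0.le)
    (sub_nonneg.2 (inv_le_one_of_one_le₀ hx)) (by ring)
  simp only [smul_eq_mul, mul_zero, add_zero, hV.2.2.1, inv_mul_cancel₀ h0.ne', habs] at h
  rwa [inv_mul_eq_div, le_div_iff₀ h0, mul_comm] at h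

lemma exists_abs_le (hV : IsOrlicz V) (c : ℝ) : ∃ L, 0 < L ∧ ∀ x, V x ≤ c → |x| ≤ L := by
  have h1 : 0 < V 1 := hV.2.2.2.1 1 one_ne_zero
  refine ⟨max 1 (c / V 1), by positivity, fun x hx => ?_⟩
  rcases le_total |x| 1 with h | h
  · exact h.trans (le_max_left _ _)
  · refine le_trans ?_ (le_max_right _ _)
    rw [le_div_iff₀ h1]
    exact (hV.abs_mul_le h).trans hx

lemma eventually_le (hV : IsOrlicz V) {c : ℝ} (hc : 0 < c) : ∀ᶠ x in 𝓝 0, V x ≤ c :=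
  (hV.continuous.tendsto' 0 0 hV.2.2.1).eventually_le_const hc

end IsOrlicz

lemma mV_add_smul (V : ℝ → ℝ) (a b : ℝ≥0∞) (μ ν : Measure ℝ) :
    mV V (a • μ + b • ν) = a * mV V μ + b * mV V ν := by
  simp [mV, lintegral_add_measure, lintegral_smul_measure]

lemma mV_le_of_forall_le {V : ℝ → ℝ} {μ : Measure ℝ} [IsProbabilityMeasure μ] {c : ℝ}
    (h : ∀ᵐ x ∂μ, V x ≤ c) : mV V μ ≤ ENNReal.ofReal c := by
  calc mV V μ ≤ ∫⁻ _, ENNReal.ofReal c ∂μ :=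
        lintegral_mono_ae (h.mono fun x hx => ENNReal.ofReal_le_ofReal hx)
    _ = ENNReal.ofReal c := by simp

/-- A single-coordinate marginal of the uniform distribution on a bounded set has a density with
finite entropy. -/
lemma exists_isEntDensity_marginal {n : ℕ} {K : Set (Fin n → ℝ)} (h0 : volume K ≠ 0)
    (h1 : volume K ≠ ∞) {L : ℝ} (hL : ∀ x ∈ K, ∀ i, |x i| ≤ L) (i : Fin n) :
    ∃ f, IsEntDensity f ∧ (ProbabilityTheory.cond volume K).map (fun x => x i) = densMeas f := by
  have : IsProbabilityMeasure (ProbabilityTheory.cond volume K) :=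
    ProbabilityTheory.cond_isProbabilityMeasure_of_finite h0 h1
  have hm : Measurable fun x : Fin n → ℝ => x i := measurable_pi_apply i
  have : IsProbabilityMeasure ((ProbabilityTheory.cond volume K).map (fun x => x i)) :=
    Measure.isProbabilityMeasure_map hm.aemeasurable
  set S := Set.Icc (-L) L with hS
  refine exists_isEntDensity_of_le (S := S)
    (C := (volume K)⁻¹ * ∏ _j ∈ Finset.univ \ {i}, volume S) _ measurableSet_Icc
    (by simp [hS]) (ENNReal.mul_ne_top (ENNReal.inv_ne_top.2 h0)
      (ENNReal.prod_ne_top fun _ _ => by simp [hS])) ?_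
  refine Measure.le_iff.2 fun B hB => ?_
  have hsub : K ∩ (fun x => x i) ⁻¹' B ⊆ Set.pi Set.univ (Function.update (fun _ => S) i (B ∩ S)) := by
    rintro x ⟨hx, hxB⟩ j -
    by_cases hj : j = i
    · subst hj
      simpa [hS] using ⟨hxB, abs_le.1 (hL x hx j)⟩
    · simpa [hj, hS] using abs_le.1 (hL x hx j)
  rw [Measure.map_apply hm hB, ProbabilityTheory.cond, Measure.smul_apply, smul_eq_mul,
    Measure.restrict_apply (hm hB), Measure.smul_apply, smul_eq_mul, Measure.restrict_apply hB,
    mul_assoc]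
  gcongr
  rw [Set.inter_comm]
  refine (measure_mono hsub).trans ?_
  rw [volume_pi_pi]
  have : ∀ j, volume (Function.update (fun _ => S) i (B ∩ S) j) =
      Function.update (fun _ => volume S) i (volume (B ∩ S)) j := fun j =>
    Function.apply_update (fun _ A => volume A) (fun _ => S) i (B ∩ S) j
  simp_rw [this]
  rw [Finset.prod_update_of_mem (Finset.mem_univ i), mul_comm]

lemma mV_marginal_le {n : ℕ} (hn : n ≠ 0) {K : Set (Fin n → ℝ)} (hK : MeasurableSet K)
    (h0 : volume K ≠ 0) (h1 : volume K ≠ ∞) {V : ℝ → ℝ} (hV : Measurable V) (hV0 : ∀ x, 0 ≤ V x)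
    {c : ℝ} (hc : ∀ x ∈ K, ∑ i, V (x i) ≤ c * n) {g : Measure ℝ}
    (hg : ∀ i, (ProbabilityTheory.cond volume K).map (fun x => x i) = g) :
    mV V g ≤ ENNReal.ofReal c := by
  have : IsProbabilityMeasure (ProbabilityTheory.cond volume K) :=
    ProbabilityTheory.cond_isProbabilityMeasure_of_finite h0 h1
  have hsum : (n : ℝ≥0∞) * mV V g = ∫⁻ x, ENNReal.ofReal (∑ i, V (x i))
      ∂ProbabilityTheory.cond volume K := by
    simp_rw [ENNReal.ofReal_sum_of_nonneg fun _ _ => hV0 _]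
    rw [lintegral_finsetSum _ fun i _ => Measurable.ennreal_ofReal (by fun_prop)]
    have : ∀ i : Fin n, ∫⁻ x, ENNReal.ofReal (V (x i)) ∂ProbabilityTheory.cond volume K =
        mV V g := fun i => by
      rw [← hg i, mV, lintegral_map hV.ennreal_ofReal (measurable_pi_apply i)]
    simp [this]
  have hle : (n : ℝ≥0∞) * mV V g ≤ n * ENNReal.ofReal c := by
    rw [hsum]
    calc _ ≤ ∫⁻ _, ENNReal.ofReal (c * n) ∂ProbabilityTheory.cond volume K :=
          lintegral_mono_ae ((ProbabilityTheory.ae_cond_mem hK).mono fun x hx =>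
            ENNReal.ofReal_le_ofReal (hc x hx))
      _ = n * ENNReal.ofReal c := by
          rw [lintegral_const, measure_univ, mul_one, ENNReal.ofReal_mul' (Nat.cast_nonneg n),
            ENNReal.ofReal_natCast, mul_comm]
  exact (ENNReal.mul_le_mul_iff_right (by simpa using hn) (ENNReal.natCast_ne_top n)).1 hle

/-- The constraint set obtained by intersecting two Orlicz balls. -/
def doubleBall (V₁ V₂ : ℝ → ℝ) (c₁ c₂ : ℝ) (n : ℕ) : Set (Fin n → ℝ) :=
  OrliczBall V₁ c₁ n ∩ OrliczBall V₂ c₂ n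

lemma measurableSet_orliczBall {V : ℝ → ℝ} (hV : Measurable V) (c : ℝ) (n : ℕ) :
    MeasurableSet (OrliczBall V c n) :=
  measurableSet_le (Finset.measurable_fun_sum _ fun i _ => hV.comp (measurable_pi_apply i))
    measurable_const

lemma comp_perm_mem_orliczBall {V : ℝ → ℝ} {c : ℝ} {n : ℕ} (σ : Equiv.Perm (Fin n))
    (x : Fin n → ℝ) : x ∘ σ ∈ OrliczBall V c n ↔ x ∈ OrliczBall V c n := by
  simp only [OrliczBall, Set.mem_ofPred_eq, Function.comp_apply]
  rw [Equiv.sum_comp σ fun i => V (x i)]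

lemma IsOrlicz.exists_orliczBall_abs_le {V : ℝ → ℝ} (hV : IsOrlicz V) (c : ℝ) (n : ℕ) :
    ∃ L, 0 < L ∧ ∀ x ∈ OrliczBall V c n, ∀ i, |x i| ≤ L := by
  obtain ⟨L, hL, h⟩ := hV.exists_abs_le (c * n)
  exact ⟨L, hL, fun x hx i => h _ ((Finset.single_le_sum (f := fun i => V (x i))
    (fun j _ => hV.2.2.2.2 _) (Finset.mem_univ i)).trans hx)⟩

lemma IsOrlicz.volume_orliczBall_ne_top {V : ℝ → ℝ} (hV : IsOrlicz V) (c : ℝ) (n : ℕ) :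
    volume (OrliczBall V c n) ≠ ∞ := by
  obtain ⟨L, hL, h⟩ := hV.exists_orliczBall_abs_le c n
  have hsub : OrliczBall V c n ⊆ Set.pi Set.univ fun _ => Set.Icc (-L) L :=
    fun x hx i _ => abs_le.1 (h x hx i)
  refine measure_ne_top_of_subset hsub ?_
  rw [volume_pi_pi]
  exact ENNReal.prod_ne_top fun _ _ => by simp

/-- Conditioning the uniform distribution on an Orlicz ball gives the uniform distribution on an
intersection of Orlicz balls. -/
lemma cond_unifBall {V₁ V₂ : ℝ → ℝ} (hV₁ : IsOrlicz V₁) (hV₂ : IsOrlicz V₂) {c₁ c₂ : ℝ} {n : ℕ}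
    (hn : n ≠ 0) :
    ProbabilityTheory.cond (unifBall V₁ c₁ n)
        {x : Fin n → ℝ | (1 / (n : ℝ)) * ∑ i, V₂ (x i) ≤ c₂} =
      ProbabilityTheory.cond volume (doubleBall V₁ V₂ c₁ c₂ n) := by
  have hn' : (0 : ℝ) < n := by positivity
  have hset : {x : Fin n → ℝ | (1 / (n : ℝ)) * ∑ i, V₂ (x i) ≤ c₂} = OrliczBall V₂ c₂ n := by
    ext x
    simp only [OrliczBall, Set.mem_ofPred_eq]
    rw [one_div, inv_mul_le_iff₀ hn', mul_comm (n : ℝ)]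
  rw [hset]
  exact ProbabilityTheory.cond_cond_eq_cond_inter'
    (measurableSet_orliczBall hV₁.continuous.measurable _ _)
    (measurableSet_orliczBall hV₂.continuous.measurable _ _) (hV₁.volume_orliczBall_ne_top _ _)

lemma ae_tendsto_average (μ : Measure ℝ) [IsProbabilityMeasure μ] {φ : ℝ → ℝ} (hφ : Measurable φ)
    (hi : Integrable φ μ) :
    ∀ᵐ ω ∂Measure.infinitePi fun _ : ℕ => μ,
      Tendsto (fun n : ℕ => (∑ i : Fin n, φ (ω i)) / n) atTop (𝓝 (∫ x, φ x ∂μ)) := by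
  have hid : ∀ i : ℕ, (Measure.infinitePi fun _ : ℕ => μ).map (fun ω => φ (ω i)) = μ.map φ :=
    fun i => (Measure.map_map hφ (measurable_pi_apply i)).symm.trans
      (by rw [Measure.infinitePi_map_eval])
  have hmp := measurePreserving_eval_infinitePi (fun _ : ℕ => μ) 0
  have h := ProbabilityTheory.strong_law_ae_real (μ := Measure.infinitePi fun _ : ℕ => μ)
    (fun i ω => φ (ω i)) (hmp.integrable_comp_of_integrable hi)
    (fun i j hij => (ProbabilityTheory.iIndepFun_infinitePi (P := fun _ : ℕ => μ)
      (X := fun _ => φ) fun _ => hφ).indepFun hij)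
    (fun i => ⟨(hφ.comp (measurable_pi_apply i)).aemeasurable,
      (hφ.comp (measurable_pi_apply 0)).aemeasurable, by rw [hid, hid]⟩)
  have hintegral : ∫ ω, φ (ω 0) ∂Measure.infinitePi (fun _ : ℕ => μ) = ∫ x, φ x ∂μ := by
    rw [← Measure.infinitePi_map_eval (fun _ : ℕ => μ) 0,
      integral_map (measurable_pi_apply 0).aemeasurable hφ.aestronglyMeasurable,
      Measure.infinitePi_map_eval]
  simp only [hintegral] at h
  filter_upwards [h] with ω hω
  refine hω.congr fun n => ?_
  rw [Finset.sum_range]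

/-- A property of long samples that holds eventually almost surely has, eventually, probability at
least one half under the product measures. -/
lemma eventually_half_le_pi (μ : Measure ℝ) [IsProbabilityMeasure μ]
    {A : ∀ n, Set (Fin n → ℝ)} (hA : ∀ n, MeasurableSet (A n))
    (h : ∀ᵐ ω ∂Measure.infinitePi fun _ : ℕ => μ, ∀ᶠ n in atTop, (fun i : Fin n => ω i) ∈ A n) :
    ∀ᶠ n in atTop, 2⁻¹ ≤ Measure.pi (fun _ : Fin n => μ) (A n) := by
  have hm : ∀ n : ℕ, Measurable fun (ω : ℕ → ℝ) (i : Fin n) => ω i := fun n => by fun_prop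
  have hproj : ∀ n : ℕ, (Measure.infinitePi fun _ : ℕ => μ).map
      (fun (ω : ℕ → ℝ) (i : Fin n) => ω i) = Measure.pi fun _ => μ := fun n => by
    rw [Measure.map_infinitePi_infinitePi_of_inj (f := fun i : Fin n => (i : ℕ))
      Fin.val_injective, Measure.infinitePi_eq_pi]
  have ht := tendsto_measure_of_ae_tendsto_indicator_of_isFiniteMeasure atTop
    (μ := Measure.infinitePi fun _ : ℕ => μ)
    (As := fun n => (fun (ω : ℕ → ℝ) (i : Fin n) => ω i) ⁻¹' A n) MeasurableSet.univ
    (fun n => hm n (hA n)) (h.mono fun ω hω => hω.mono fun n hn => by simpa using hn)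
  rw [measure_univ] at ht
  filter_upwards [ht.eventually_const_le (u := 2⁻¹) (by simp [ENNReal.inv_lt_one])] with n hn
  rwa [← Measure.map_apply (hm n) (hA n), hproj] at hn

lemma integrable_of_mV_ne_top {V : ℝ → ℝ} (hV : Measurable V) (hV0 : ∀ x, 0 ≤ V x) {μ : Measure ℝ}
    (h : mV V μ ≠ ∞) : Integrable V μ :=
  ⟨hV.aestronglyMeasurable, by
    rw [hasFiniteIntegral_iff_ofReal (ae_of_all _ hV0)]; exact h.lt_top⟩

lemma integral_lt_of_mV_lt {V : ℝ → ℝ} (hV : Measurable V) (hV0 : ∀ x, 0 ≤ V x) {μ : Measure ℝ}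
    {c : ℝ} (h : mV V μ < ENNReal.ofReal c) : ∫ x, V x ∂μ < c := by
  rw [integral_eq_lintegral_of_nonneg_ae (ae_of_all _ hV0) hV.aestronglyMeasurable]
  exact (ENNReal.lt_ofReal_iff_toReal_lt h.ne_top).1 h

/-- The probability of a set of near-typical samples bounds its volume from below. -/
lemma pi_densMeas_le {p : ℝ → ℝ} (hp : IsEntDensity p) {n : ℕ} {A : Set (Fin n → ℝ)}
    (hA : MeasurableSet A) {a : ℝ} (hpos : ∀ x ∈ A, ∀ i, 0 < p (x i))
    (h : ∀ x ∈ A, a ≤ ∑ i, -Real.log (p (x i))) :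
    Measure.pi (fun _ : Fin n => densMeas p) A ≤ ENNReal.ofReal (Real.exp (-a)) * volume A := by
  rw [pi_densMeas hp, withDensity_apply _ hA, ← setLIntegral_const]
  refine setLIntegral_mono measurable_const fun x hx => ?_
  rw [← ENNReal.ofReal_prod_of_nonneg fun _ _ => hp.nonneg _]
  refine ENNReal.ofReal_le_ofReal ?_
  rw [← Finset.prod_congr rfl fun i _ => Real.exp_log (hpos x hx i), ← Real.exp_sum]
  have := h x hx
  rw [Finset.sum_neg_distrib] at this
  exact Real.exp_le_exp.2 (by linarith)

/-- Entropy lower bound for the volume of an intersection of Orlicz balls. -/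
lemma eventually_le_log_volume_doubleBall {V₁ V₂ : ℝ → ℝ} (hV₁ : IsOrlicz V₁) (hV₂ : IsOrlicz V₂)
    {c₁ c₂ : ℝ} {p : ℝ → ℝ} (hp : IsEntDensity p)
    (h₁ : mV V₁ (densMeas p) < ENNReal.ofReal c₁) (h₂ : mV V₂ (densMeas p) < ENNReal.ofReal c₂)
    {γ : ℝ} (hγ : 0 < γ) :
    ∀ᶠ n : ℕ in atTop, volume (doubleBall V₁ V₂ c₁ c₂ n) ≠ 0 ∧
      n * (-∫ x, Real.log (p x) ∂densMeas p - γ) ≤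
        Real.log (volume (doubleBall V₁ V₂ c₁ c₂ n)).toReal := by
  have := hp.isProbabilityMeasure
  have hm₁ := hV₁.continuous.measurable
  have hm₂ := hV₂.continuous.measurable
  have hlm : Measurable fun x => -Real.log (p x) := (Real.measurable_log.comp hp.meas).neg
  set H := -∫ x, Real.log (p x) ∂densMeas p with hH
  set A : ∀ n, Set (Fin n → ℝ) := fun n => doubleBall V₁ V₂ c₁ c₂ n ∩
    ({x | n * (H - γ / 2) ≤ ∑ i, -Real.log (p (x i))} ∩ {x | ∀ i, 0 < p (x i)}) with hAdef
  have hA : ∀ n, MeasurableSet (A n) := fun n => by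
    refine ((measurableSet_orliczBall hm₁ _ _).inter (measurableSet_orliczBall hm₂ _ _)).inter
      (MeasurableSet.inter ?_ ?_)
    · exact measurableSet_le measurable_const
        (Finset.measurable_fun_sum _ fun i _ => hlm.comp (measurable_pi_apply i))
    · have : {x : Fin n → ℝ | ∀ i, 0 < p (x i)} = ⋂ i, {x : Fin n → ℝ | 0 < p (x i)} := by
        ext; simp
      rw [this]
      exact MeasurableSet.iInter fun i => measurableSet_lt measurable_const
        (hp.meas.comp (measurable_pi_apply i))
  have hpos : ∀ᵐ ω ∂Measure.infinitePi fun _ : ℕ => densMeas p, ∀ i, 0 < p (ω i) := by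
    refine ae_all_iff.2 fun i => ?_
    have h := hp.ae_pos
    rw [← Measure.infinitePi_map_eval (fun _ : ℕ => densMeas p) i] at h
    exact ae_of_ae_map (measurable_pi_apply i).aemeasurable h
  have hev := eventually_half_le_pi (densMeas p) hA (by
    filter_upwards [hpos,
      ae_tendsto_average (densMeas p) hm₁ (integrable_of_mV_ne_top hm₁ hV₁.2.2.2.2 h₁.ne_top),
      ae_tendsto_average (densMeas p) hm₂ (integrable_of_mV_ne_top hm₂ hV₂.2.2.2.2 h₂.ne_top),
      ae_tendsto_average (densMeas p) hlm hp.integrable_log.neg] with ω hω hω₁ hω₂ hω₃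
    rw [integral_neg, ← hH] at hω₃
    filter_upwards [hω₁.eventually_lt_const (integral_lt_of_mV_lt hm₁ hV₁.2.2.2.2 h₁),
      hω₂.eventually_lt_const (integral_lt_of_mV_lt hm₂ hV₂.2.2.2.2 h₂),
      hω₃.eventually_const_lt (show H - γ / 2 < H by linarith), eventually_gt_atTop 0]
      with n hn₁ hn₂ hn₃ hn
    have hn' : (0 : ℝ) < n := by exact_mod_cast hn
    rw [div_lt_iff₀ hn'] at hn₁ hn₂
    rw [lt_div_iff₀ hn', mul_comm] at hn₃
    exact ⟨⟨hn₁.le, hn₂.le⟩, hn₃.le, fun i => hω i⟩)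
  filter_upwards [hev, eventually_ge_atTop ⌈2 * Real.log 2 / γ⌉₊] with n hn hnγ
  have hle := hn.trans (pi_densMeas_le hp (hA n) (fun x hx => hx.2.2) fun x hx => hx.2.1)
  have hsub : volume (A n) ≤ volume (doubleBall V₁ V₂ c₁ c₂ n) :=
    measure_mono Set.inter_subset_left
  replace hle := hle.trans (mul_le_mul_right hsub _)
  have htop : volume (doubleBall V₁ V₂ c₁ c₂ n) ≠ ∞ :=
    measure_ne_top_of_subset Set.inter_subset_left (hV₁.volume_orliczBall_ne_top _ _)
  have h0 : volume (doubleBall V₁ V₂ c₁ c₂ n) ≠ 0 := by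
    rintro h
    simp [h] at hle
  refine ⟨h0, ?_⟩
  have hv := ENNReal.toReal_pos h0 htop
  set v := (volume (doubleBall V₁ V₂ c₁ c₂ n)).toReal
  rw [← ENNReal.ofReal_toReal htop, ← ENNReal.ofReal_mul (Real.exp_pos _).le,
    ENNReal.le_ofReal_iff_toReal_le (by simp) (by positivity)] at hle
  have hlog := Real.log_le_log (by norm_num) hle
  rw [Real.log_mul (Real.exp_pos _).ne' hv.ne', Real.log_exp, ENNReal.toReal_inv, Real.log_inv]
    at hlog
  have h2 : 2 * Real.log 2 ≤ n * γ := by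
    rw [← div_le_iff₀ hγ]
    exact Nat.ceil_le.1 hnγ
  simp only [ENNReal.toReal_ofNat] at hlog
  linarith

namespace IsEntDensity

variable {f g : ℝ → ℝ} {a b : ℝ}

lemma integrable_log_mix_iff (hf : IsEntDensity f) (hg : IsEntDensity g) (ha : 0 < a) (hb : 0 < b)
    {φ : ℝ → ℝ} :
    Integrable φ (densMeas fun x => a * f x + b * g x) ↔
      Integrable φ (densMeas f) ∧ Integrable φ (densMeas g) := by
  rw [densMeas_mix hf hg ha.le hb.le, integrable_add_measure,
    integrable_smul_measure (by simpa using ha) ENNReal.ofReal_ne_top,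
    integrable_smul_measure (by simpa using hb) ENNReal.ofReal_ne_top]

lemma integral_densMeas_mix (hf : IsEntDensity f) (hg : IsEntDensity g) (ha : 0 < a) (hb : 0 < b)
    {φ : ℝ → ℝ} (hφ : Integrable φ (densMeas f)) (hφ' : Integrable φ (densMeas g)) :
    ∫ x, φ x ∂densMeas (fun x => a * f x + b * g x) =
      a * ∫ x, φ x ∂densMeas f + b * ∫ x, φ x ∂densMeas g := by
  rw [densMeas_mix hf hg ha.le hb.le, integral_add_measure (hφ.smul_measure ENNReal.ofReal_ne_top)
    (hφ'.smul_measure ENNReal.ofReal_ne_top), integral_smul_measure, integral_smul_measure,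
    ENNReal.toReal_ofReal ha.le, ENNReal.toReal_ofReal hb.le, smul_eq_mul, smul_eq_mul]

lemma densMeas_mix_real (hf : IsEntDensity f) (hg : IsEntDensity g) (ha : 0 ≤ a) (hb : 0 ≤ b)
    (B : Set ℝ) :
    (densMeas fun x => a * f x + b * g x).real B =
      a * (densMeas f).real B + b * (densMeas g).real B := by
  have := hf.isProbabilityMeasure
  have := hg.isProbabilityMeasure
  rw [densMeas_mix hf hg ha hb, measureReal_add_apply
      (ENNReal.mul_ne_top ENNReal.ofReal_ne_top (measure_ne_top _ _))
      (ENNReal.mul_ne_top ENNReal.ofReal_ne_top (measure_ne_top _ _)),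
    measureReal_ennreal_smul_apply, measureReal_ennreal_smul_apply, ENNReal.toReal_ofReal ha,
    ENNReal.toReal_ofReal hb]

/-- If the mixture `m` of `s`, `f` and `u` has entropy at most that of `s`, then the cross entropy
of `f` relative to `m` is controlled. -/
lemma crossEntropy_mix_le {s u : ℝ → ℝ} (hs : IsEntDensity s) (hf : IsEntDensity f)
    (hu : IsEntDensity u) {t : ℝ} (ht : 0 < t) (ht1 : t < 1) {m : ℝ → ℝ}
    (hm : m = fun x => 1 / 2 * s x + 1 / 2 * ((1 - t) * f x + t * u x))
    (hle : -∫ x, Real.log (m x) ∂densMeas m ≤ -∫ x, Real.log (s x) ∂densMeas s) :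
    IsEntDensity m ∧ Integrable (fun x => Real.log (m x)) (densMeas f) ∧
      (∀ᵐ x ∂densMeas f, 0 < m x) ∧
      (1 - t) * (-∫ x, Real.log (m x) ∂densMeas f) ≤
        -∫ x, Real.log (s x) ∂densMeas s - t * (-∫ x, Real.log (u x) ∂densMeas u) := by
  have h2 : (0 : ℝ) < 1 / 2 := by norm_num
  have ht' : 0 < 1 - t := by linarith
  have hq : IsEntDensity fun x => (1 - t) * f x + t * u x := mix hf hu ht' ht (by ring)
  have hmd : IsEntDensity m := hm ▸ mix hs hq h2 h2 (by norm_num)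
  have hi := hmd.integrable_log
  have hi' : Integrable (fun x => Real.log (m x))
      (densMeas fun x => 1 / 2 * s x + 1 / 2 * ((1 - t) * f x + t * u x)) := hm ▸ hi
  obtain ⟨his, hiq⟩ := (integrable_log_mix_iff hs hq h2 h2).1 hi'
  obtain ⟨hif, hiu⟩ := (integrable_log_mix_iff hf hu ht' ht).1 hiq
  have hmx : ∀ x, m x = 1 / 2 * s x + 1 / 2 * ((1 - t) * f x + t * u x) := fun x => by rw [hm]
  have hs0 := hs.nonneg
  have hf0 := hf.nonneg
  have hu0 := hu.nonneg
  have hgs := gibbs hs hmd (fun x hx => by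
    nlinarith [hmx x, hs0 x, mul_nonneg ht'.le (hf0 x), mul_nonneg ht.le (hu0 x)]) his
  have hgu := gibbs hu hmd (fun x hx => by
    have : t * u x = 0 := by
      nlinarith [hmx x, hs0 x, mul_nonneg ht'.le (hf0 x), mul_nonneg ht.le (hu0 x)]
    exact (mul_eq_zero.1 this).resolve_left ht.ne') hiu
  refine ⟨hmd, hif, ?_, ?_⟩
  · filter_upwards [hf.ae_pos] with x hx
    rw [hmx]
    have := mul_pos ht' hx
    have := mul_nonneg ht.le (hu0 x)
    linarith [hs0 x]
  · have e : ∫ x, Real.log (m x) ∂densMeas m = 1 / 2 * ∫ x, Real.log (m x) ∂densMeas s +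
        1 / 2 * ((1 - t) * ∫ x, Real.log (m x) ∂densMeas f +
          t * ∫ x, Real.log (m x) ∂densMeas u) := by
      rw [← integral_densMeas_mix hf hu ht' ht hif hiu,
        ← integral_densMeas_mix hs hq h2 h2 his hiq, ← hm]
    have := mul_le_mul_of_nonneg_left hgu ht.le
    linarith

end IsEntDensity

lemma IsEntDensity.mV_mix_le {f g V : ℝ → ℝ} (hf : IsEntDensity f) (hg : IsEntDensity g)
    {a b c d : ℝ} (ha : 0 ≤ a) (hb : 0 ≤ b) (hc : 0 ≤ c) (hd : 0 ≤ d)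
    (h : mV V (densMeas f) ≤ ENNReal.ofReal c) (h' : mV V (densMeas g) ≤ ENNReal.ofReal d) :
    mV V (densMeas fun x => a * f x + b * g x) ≤ ENNReal.ofReal (a * c + b * d) := by
  rw [densMeas_mix hf hg ha hb, mV_add_smul,
    ENNReal.ofReal_add (mul_nonneg ha hc) (mul_nonneg hb hd), ENNReal.ofReal_mul ha,
    ENNReal.ofReal_mul hb]
  gcongr

/-- If the volume of the symmetric set `K` nearly attains the cross entropy bound, then marginals
of its uniform distribution are nearly dominated by the product measure `m^{⊗k}`. -/
lemma map_cond_real_le_pi_add {n k : ℕ} (hkn : k + 1 ≤ n) {K : Set (Fin n → ℝ)}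
    (hK : MeasurableSet K) (hsymm : ∀ (σ : Equiv.Perm (Fin n)) (x : Fin n → ℝ), x ∘ σ ∈ K ↔ x ∈ K)
    (h0 : volume K ≠ 0) (h1 : volume K ≠ ∞) {m : ℝ → ℝ} (hm : IsEntDensity m) {g : Measure ℝ}
    (hg : ∀ i, (ProbabilityTheory.cond volume K).map (fun x => x i) = g)
    (hgi : Integrable (fun x => Real.log (m x)) g) (hgpos : ∀ᵐ x ∂g, 0 < m x)
    {κ s : ℝ} (hs : 0 < s) (hs1 : s ≤ 1) (hκ : 2 * (k + 1) * κ ≤ s ^ 2)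
    (hvol : n * (-∫ x, Real.log (m x) ∂g) - Real.log (volume K).toReal ≤ n * κ) (hκ0 : 0 ≤ κ)
    (ι : Fin k ↪ Fin n) {B : Set (Fin k → ℝ)} (hB : MeasurableSet B) :
    ((ProbabilityTheory.cond volume K).map (fun x i => x (ι i))).real B ≤
      (Measure.pi fun _ : Fin k => densMeas m).real B + 2 * s := by
  set M := n / (k + 1) with hM
  have hMpos : 0 < M := Nat.div_pos hkn k.succ_pos
  have hMn : M * (k + 1) ≤ n := Nat.div_mul_le_self n (k + 1)
  have hnM : n ≤ 2 * M * (k + 1) := by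
    have h := Nat.lt_div_mul_add (a := n) k.succ_pos
    have h' : k + 1 ≤ M * (k + 1) := Nat.le_mul_of_pos_left _ hMpos
    rw [Nat.succ_eq_add_one, ← hM] at h
    linarith
  obtain ⟨e⟩ : Nonempty (Fin M × Fin k ↪ Fin n) := by
    refine Function.Embedding.nonempty_of_card_le ?_
    simp only [Fintype.card_prod, Fintype.card_fin]
    exact (Nat.mul_le_mul_left M k.le_succ).trans hMn
  have hG : ∀ j, (ProbabilityTheory.cond volume K).map (fun x i => x (e (j, i))) =
      (ProbabilityTheory.cond volume K).map (fun x i => x (ι i)) := fun j =>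
    map_cond_comp_embedding_eq hK hsymm ((Function.Embedding.sectR j (Fin k)).trans e) ι
  have h := block_marginal_excess_le h0 h1 hm e hg hgi hgpos hG hB hs hs1
  set d := ((ProbabilityTheory.cond volume K).map (fun x i => x (ι i))).real B -
    (Measure.pi fun _ : Fin k => densMeas m).real B with hd
  have hMr : (0 : ℝ) < M := by exact_mod_cast hMpos
  have hnr : (n : ℝ) ≤ 2 * M * (k + 1) := by exact_mod_cast hnM
  have h3 : (M : ℝ) * (s * d) ≤ M * (s * (2 * s)) := by
    have h4 : n * κ ≤ M * s ^ 2 := by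
      calc (n : ℝ) * κ ≤ 2 * M * (k + 1) * κ := by gcongr
        _ = M * (2 * (k + 1) * κ) := by ring
        _ ≤ M * s ^ 2 := by gcongr
    nlinarith
  have h5 := le_of_mul_le_mul_left (le_of_mul_le_mul_left h3 hMr) hs
  linarith

lemma measure_le_add_ofReal_of_real_le {α : Type*} [MeasurableSpace α] {μ ν : Measure α}
    [IsFiniteMeasure μ] [IsFiniteMeasure ν] {B : Set α} {a : ℝ} (ha : 0 ≤ a)
    (h : μ.real B ≤ ν.real B + a) : μ B ≤ ν B + ENNReal.ofReal a := by
  rw [← ofReal_measureReal (μ := μ), ← ofReal_measureReal (μ := ν),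
    ← ENNReal.ofReal_add measureReal_nonneg ha]
  exact ENNReal.ofReal_le_ofReal h

/-- Near-attainment of the entropy bound forces the marginals of the uniform distribution on `K` to
be nearly dominated by the product of the maximizer. -/
lemma map_cond_le_pi_add {n k : ℕ} (hkn : k + 2 ≤ n) {K : Set (Fin n → ℝ)}
    (hK : MeasurableSet K) (hsymm : ∀ (σ : Equiv.Perm (Fin n)) (x : Fin n → ℝ), x ∘ σ ∈ K ↔ x ∈ K)
    (h0 : volume K ≠ 0) (h1 : volume K ≠ ∞) {f m p u : ℝ → ℝ} (hm : IsEntDensity m)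
    (hp : IsEntDensity p) (hf : IsEntDensity f) (hu : IsEntDensity u) {t : ℝ} (ht : 0 < t)
    (ht1 : t < 1) (hmeq : m = fun x => 1 / 2 * p x + 1 / 2 * ((1 - t) * f x + t * u x))
    (hg : ∀ i, (ProbabilityTheory.cond volume K).map (fun x => x i) = densMeas f)
    (hgi : Integrable (fun x => Real.log (m x)) (densMeas f))
    (hgpos : ∀ᵐ x ∂densMeas f, 0 < m x)
    {κ s : ℝ} (hs : 0 < s) (hs1 : s ≤ 1) (hκ : 2 * (k + 2) * κ ≤ s ^ 2)
    (hvol : n * (-∫ x, Real.log (m x) ∂densMeas f) - Real.log (volume K).toReal ≤ n * κ)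
    (hκ0 : 0 ≤ κ) (ι : Fin k ↪ Fin n) {B : Set (Fin k → ℝ)} (hB : MeasurableSet B) :
    (ProbabilityTheory.cond volume K).map (fun x i => x (ι i)) B ≤
      Measure.pi (fun _ : Fin k => densMeas p) B +
        ENNReal.ofReal (k * (t + 2 * s) + 2 * s) := by
  have hmp := hm.isProbabilityMeasure
  have hpp := hp.isProbabilityMeasure
  have hfp := hf.isProbabilityMeasure
  have hup := hu.isProbabilityMeasure
  have : IsProbabilityMeasure (ProbabilityTheory.cond volume K) :=
    ProbabilityTheory.cond_isProbabilityMeasure_of_finite h0 h1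
  have hk0 : (0 : ℝ) ≤ k := Nat.cast_nonneg k
  have hone : ∀ A, MeasurableSet A → (densMeas f).real A ≤ (densMeas m).real A + 2 * s := by
    intro A hA
    have hev : Measurable fun y : Fin 1 → ℝ => y 0 := measurable_pi_apply 0
    set i₀ : Fin n := ⟨0, by omega⟩
    have h := map_cond_real_le_pi_add (k := 1) (by omega) hK hsymm h0 h1 hm hg hgi hgpos hs hs1
      (κ := κ) (le_trans (by push_cast; nlinarith [mul_nonneg hk0 hκ0]) hκ) hvol hκ0
      ⟨fun _ => i₀, fun _ _ _ => Subsingleton.elim _ _⟩ (hev hA)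
    have e1 : ((ProbabilityTheory.cond volume K).map
        (fun (x : Fin n → ℝ) (_ : Fin 1) => x i₀)).real ((fun y => y 0) ⁻¹' A) =
        (densMeas f).real A := by
      rw [← map_measureReal_apply hev hA, Measure.map_map hev (by fun_prop), ← hg i₀]
      rfl
    have e2 : (Measure.pi fun _ : Fin 1 => densMeas m).real ((fun y => y 0) ⁻¹' A) =
        (densMeas m).real A := by
      rw [← map_measureReal_apply hev hA]
      exact congrArg (·.real A) (measurePreserving_eval (fun _ : Fin 1 => densMeas m) 0).map_eq
    rw [← e1, ← e2]
    exact h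
  have hdom : ∀ A, MeasurableSet A → densMeas m A ≤ densMeas p A + ENNReal.ofReal (t + 2 * s) := by
    intro A hA
    refine measure_le_add_ofReal_of_real_le (by positivity) ?_
    have h2 : (0 : ℝ) ≤ 1 / 2 := by norm_num
    have ht' : 0 < 1 - t := by linarith
    have e : (densMeas m).real A = 1 / 2 * (densMeas p).real A +
        1 / 2 * ((1 - t) * (densMeas f).real A + t * (densMeas u).real A) := by
      rw [← hf.densMeas_mix_real hu ht'.le ht.le,
        ← hp.densMeas_mix_real (hf.mix hu ht' ht (by ring)) h2 h2, ← hmeq]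
    have hAf := hone A hA
    have hu1 : (densMeas u).real A ≤ 1 := measureReal_le_one
    have hf0 : 0 ≤ (densMeas f).real A := measureReal_nonneg
    have h3 := mul_le_mul_of_nonneg_left hu1 ht.le
    have h4 := mul_nonneg ht.le hf0
    linarith
  have : IsFiniteMeasure ((ProbabilityTheory.cond volume K).map fun x i => x (ι i)) := by
    infer_instance
  have hmain := measure_le_add_ofReal_of_real_le (by positivity)
    (map_cond_real_le_pi_add (k := k) (by omega) hK hsymm h0 h1 hm hg hgi hgpos hs hs1
      (κ := κ) (le_trans (by gcongr; linarith) hκ) hvol hκ0 ι hB)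
  calc _ ≤ _ := hmain
    _ ≤ Measure.pi (fun _ : Fin k => densMeas p) B + k * ENNReal.ofReal (t + 2 * s) +
        ENNReal.ofReal (2 * s) := by gcongr; exact pi_apply_le_add hdom k B hB
    _ = _ := by
      rw [ENNReal.ofReal_add (p := k * (t + 2 * s)) (by positivity) (by positivity),
        ENNReal.ofReal_mul hk0,
        ENNReal.ofReal_natCast, add_assoc]

lemma map_cond_eval_eq {n : ℕ} {K : Set (Fin n → ℝ)} (hK : MeasurableSet K)
    (hsymm : ∀ (σ : Equiv.Perm (Fin n)) (x : Fin n → ℝ), x ∘ σ ∈ K ↔ x ∈ K) (i j : Fin n) :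
    (ProbabilityTheory.cond volume K).map (fun x => x i) =
      (ProbabilityTheory.cond volume K).map (fun x => x j) := by
  have hev : Measurable fun y : Fin 1 → ℝ => y 0 := measurable_pi_apply 0
  have h := congrArg (Measure.map fun y : Fin 1 → ℝ => y 0)
    (map_cond_comp_embedding_eq (k := 1) hK hsymm
      ⟨fun _ => i, fun _ _ _ => Subsingleton.elim _ _⟩
      ⟨fun _ => j, fun _ _ _ => Subsingleton.elim _ _⟩)
  rwa [Measure.map_map hev (by fun_prop), Measure.map_map hev (by fun_prop)] at h

/-- Two Orlicz functions are simultaneously small near the origin, so some density of finite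
entropy has small moments. -/
lemma exists_isEntDensity_mV_le {V₁ V₂ : ℝ → ℝ} (hV₁ : IsOrlicz V₁) (hV₂ : IsOrlicz V₂) {c₁ c₂ : ℝ}
    (hc₁ : 0 < c₁) (hc₂ : 0 < c₂) :
    ∃ u, IsEntDensity u ∧ mV V₁ (densMeas u) ≤ ENNReal.ofReal c₁ ∧
      mV V₂ (densMeas u) ≤ ENNReal.ofReal c₂ := by
  obtain ⟨a, ha, h⟩ := Metric.eventually_nhds_iff_ball.1
    ((hV₁.eventually_le hc₁).and (hV₂.eventually_le hc₂))
  set S := Metric.ball (0 : ℝ) a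
  have h0 : volume S ≠ 0 := (Metric.measure_ball_pos volume 0 ha).ne'
  have h1 : volume S ≠ ∞ := measure_ball_lt_top.ne
  have : IsProbabilityMeasure (ProbabilityTheory.cond volume S) :=
    ProbabilityTheory.cond_isProbabilityMeasure_of_finite h0 h1
  have hmem := ProbabilityTheory.ae_cond_mem (μ := (volume : Measure ℝ)) (s := S)
    Metric.isOpen_ball.measurableSet
  obtain ⟨u, hu, he⟩ := exists_isEntDensity_of_le (ProbabilityTheory.cond volume S)
    Metric.isOpen_ball.measurableSet h1 (ENNReal.inv_ne_top.2 h0) le_rfl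
  refine ⟨u, hu, ?_, ?_⟩ <;> rw [← he] <;> refine mV_le_of_forall_le ?_
  · exact hmem.mono fun x hx => (h x hx).1
  · exact hmem.mono fun x hx => (h x hx).2

/-- The first `k` coordinates of a uniform random point on `B₁^{n,V₁}`, conditioned on
`(1/n) ∑ V₂(xᵢ) ≤ R + ε`, converge weakly (as `n → ∞` followed by `ε → 0`) to the
`k`-fold product of the entropy maximizer `ν*`. -/
theorem stmt17 (V₁ V₂ : ℝ → ℝ) (hV₁ : IsOrlicz V₁) (hV₂ : IsOrlicz V₂)
    (hgrow : Tendsto (fun x : ℝ => V₁ x / V₂ x) (atTop ⊔ atBot) atTop)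
    (R : ℝ) (hR : 0 < R) (k : ℕ)
    (νstar : ProbabilityMeasure ℝ)
    (hν₁ : mV V₁ (νstar : Measure ℝ) ≤ 1) (hν₂ : mV V₂ (νstar : Measure ℝ) ≤ ENNReal.ofReal R)
    (hmax : ∀ ν : ProbabilityMeasure ℝ,
      mV V₁ (ν : Measure ℝ) ≤ 1 → mV V₂ (ν : Measure ℝ) ≤ ENNReal.ofReal R →
        diffEnt (ν : Measure ℝ) ≤ diffEnt (νstar : Measure ℝ))
    (huniq : ∀ ν : ProbabilityMeasure ℝ,
      mV V₁ (ν : Measure ℝ) ≤ 1 → mV V₂ (ν : Measure ℝ) ≤ ENNReal.ofReal R →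
        diffEnt (ν : Measure ℝ) = diffEnt (νstar : Measure ℝ) → ν = νstar) :
    ∀ δ : ℝ, 0 < δ → ∃ ε₀ : ℝ, 0 < ε₀ ∧ ∀ ε : ℝ, 0 < ε → ε ≤ ε₀ →
      ∃ N : ℕ, ∀ n : ℕ, N ≤ n →
        levyProkhorovDist
          (Measure.map (proj k n)
            (ProbabilityTheory.cond (unifBall V₁ 1 n)
              {x : Fin n → ℝ | (1 / (n : ℝ)) * ∑ i, V₂ (x i) ≤ R + ε}))
          (Measure.pi fun _ : Fin k => (νstar : Measure ℝ)) < δ := by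
  intro δ hδ
  obtain ⟨u, hu, hu₁, hu₂⟩ := exists_isEntDensity_mV_le hV₁ hV₂ one_half_pos (half_pos hR)
  have hup := hu.isProbabilityMeasure
  have huν := hmax ⟨densMeas u, hup⟩
    (hu₁.trans (by rw [← ENNReal.ofReal_one]; exact ENNReal.ofReal_le_ofReal (by norm_num)))
    (hu₂.trans (ENNReal.ofReal_le_ofReal (by linarith)))
  simp only [ProbabilityMeasure.coe_mk, hu.diffEnt_eq] at huν
  obtain ⟨p, hp, hνp⟩ := exists_isEntDensity_of_diffEnt_ne_bot (νstar : Measure ℝ)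
    (fun h => by simp [h] at huν)
  simp only [hνp, hp.diffEnt_eq, EReal.coe_le_coe_iff] at huν hmax hν₁ hν₂ ⊢
  rw [← ENNReal.ofReal_one] at hν₁
  have hpp := hp.isProbabilityMeasure
  set H := -∫ x, Real.log (p x) ∂densMeas p with hH
  set D := H - -∫ x, Real.log (u x) ∂densMeas u with hD
  have hD0 : 0 ≤ D := sub_nonneg.2 huν
  set s := min (1 / 2) (δ / (8 * (k + 1))) with hs
  have hs0 : 0 < s := by positivity
  have hs1 : s ≤ 1 / 2 := min_le_left _ _
  have hsδ : s * (8 * (k + 1)) ≤ δ := (le_div_iff₀ (by positivity)).1 (min_le_right _ _)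
  set t := min s (s ^ 2 / (2 * (k + 2) * (3 * D + 1))) with ht
  have ht0 : 0 < t := by positivity
  have hts : t ≤ s := min_le_left _ _
  have htκ : 2 * (k + 2) * (t * (3 * D + 1)) ≤ s ^ 2 := by
    have := (le_div_iff₀ (by positivity)).1 (min_le_right s (s ^ 2 / (2 * (k + 2) * (3 * D + 1))))
    rw [← ht] at this
    linarith
  have ht1 : t < 1 := by linarith
  have ht' : 0 < 1 - t := by linarith
  refine ⟨t * R / 2, by positivity, fun ε hε hε₀ => ?_⟩
  have hq := hp.mix hu ht' ht0 (by ring)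
  have hlarge := eventually_le_log_volume_doubleBall hV₁ hV₂ (c₁ := 1) (c₂ := R + ε) hq
    ((hp.mV_mix_le hu ht'.le ht0.le zero_le_one (by norm_num) hν₁ hu₁).trans_lt
      ((ENNReal.ofReal_lt_ofReal_iff one_pos).2 (by linarith)))
    ((hp.mV_mix_le hu ht'.le ht0.le hR.le (by positivity) hν₂ hu₂).trans_lt
      ((ENNReal.ofReal_lt_ofReal_iff (by positivity)).2 (by nlinarith [mul_pos ht0 hR]))) ht0
  obtain ⟨N, hN⟩ := eventually_atTop.1 hlarge
  refine ⟨max N (k + 2), fun n hn => ?_⟩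
  have hkn : k + 2 ≤ n := (le_max_right _ _).trans hn
  obtain ⟨h0, hvol⟩ := hN n ((le_max_left _ _).trans hn)
  have hn0 : n ≠ 0 := by omega
  rw [cond_unifBall hV₁ hV₂ hn0]
  have hm₁ := hV₁.continuous.measurable
  have hm₂ := hV₂.continuous.measurable
  set K := doubleBall V₁ V₂ 1 (R + ε) n with hKdef
  have hK : MeasurableSet K :=
    (measurableSet_orliczBall hm₁ _ _).inter (measurableSet_orliczBall hm₂ _ _)
  have hsymm : ∀ (σ : Equiv.Perm (Fin n)) (x : Fin n → ℝ), x ∘ σ ∈ K ↔ x ∈ K := fun σ x =>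
    and_congr (comp_perm_mem_orliczBall σ x) (comp_perm_mem_orliczBall σ x)
  have h1 : volume K ≠ ∞ :=
    measure_ne_top_of_subset Set.inter_subset_left (hV₁.volume_orliczBall_ne_top _ _)
  have : IsProbabilityMeasure (ProbabilityTheory.cond volume K) :=
    ProbabilityTheory.cond_isProbabilityMeasure_of_finite h0 h1
  obtain ⟨L, -, hL⟩ := hV₁.exists_orliczBall_abs_le 1 n
  obtain ⟨f, hf, hg₀⟩ := exists_isEntDensity_marginal h0 h1 (fun x hx => hL x hx.1) ⟨0, by omega⟩
  have hg : ∀ i, (ProbabilityTheory.cond volume K).map (fun x => x i) = densMeas f := fun i =>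
    (map_cond_eval_eq hK hsymm _ _).trans hg₀
  have hf₁ := mV_marginal_le hn0 hK h0 h1 hm₁ hV₁.2.2.2.2 (fun x hx => hx.1) hg
  have hf₂ := mV_marginal_le hn0 hK h0 h1 hm₂ hV₂.2.2.2.2 (fun x hx => hx.2) hg
  have hfu := hf.mix hu ht' ht0 (by ring)
  set m := fun x => 1 / 2 * p x + 1 / 2 * ((1 - t) * f x + t * u x) with hm
  have h2 : (0 : ℝ) < 1 / 2 := by norm_num
  have hmd : IsEntDensity m := hp.mix hfu h2 h2 (by norm_num)
  have hle := hmax ⟨densMeas m, hmd.isProbabilityMeasure⟩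
    ((hp.mV_mix_le hfu h2.le h2.le zero_le_one (by nlinarith)
      hν₁ (hf.mV_mix_le hu ht'.le ht0.le zero_le_one (by norm_num) hf₁ hu₁)).trans
      (ENNReal.ofReal_le_one.2 (by linarith)))
    ((hp.mV_mix_le hfu h2.le h2.le hR.le (by positivity)
      hν₂ (hf.mV_mix_le hu ht'.le ht0.le (by positivity) (by positivity) hf₂ hu₂)).trans
      (ENNReal.ofReal_le_ofReal (by nlinarith)))
  simp only [ProbabilityMeasure.coe_mk, hmd.diffEnt_eq, EReal.coe_le_coe_iff] at hle
  obtain ⟨-, hgi, hgpos, hce⟩ := hp.crossEntropy_mix_le hf hu ht0 ht1 hm hle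
  have hcross : -∫ x, Real.log (m x) ∂densMeas f ≤ H + 2 * t * D := by
    have : H - t * (-∫ x, Real.log (u x) ∂densMeas u) ≤ (1 - t) * (H + 2 * t * D) := by
      nlinarith [mul_nonneg (mul_nonneg ht0.le hD0) (show 0 ≤ 1 - 2 * t by linarith)]
    exact le_of_mul_le_mul_left (hce.trans this) ht'
  have hent := hp.integral_log_mix_le hu ht' ht0 (by ring)
  have hvol' : n * (-∫ x, Real.log (m x) ∂densMeas f) - Real.log (volume K).toReal ≤
      n * (t * (3 * D + 1)) := by
    have e1 : (n : ℝ) * (-∫ x, Real.log (m x) ∂densMeas f) ≤ n * (H + 2 * t * D) := by gcongr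
    have e2 : (n : ℝ) * (H - t * D - t) ≤ Real.log (volume K).toReal := by
      refine le_trans ?_ hvol
      gcongr
      linarith
    linarith
  have hproj : proj k n = fun x (i : Fin k) => x (Fin.castLEEmb (by omega : k ≤ n) i) := by
    ext x i
    simp only [proj, dif_pos (show (i : ℕ) < n by omega)]
    rfl
  have hpm : Measurable (proj k n) := by rw [hproj]; fun_prop
  have := Measure.isProbabilityMeasure_map (μ := ProbabilityTheory.cond volume K) hpm.aemeasurable
  refine (levyProkhorovDist_le_of_forall_le _ _ (half_pos hδ).le fun a B ha hB => ?_).trans_lt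
    (half_lt_self hδ)
  rw [hproj]
  refine (map_cond_le_pi_add hkn hK hsymm h0 h1 hmd hp hf hu ht0 ht1 hm hg hgi hgpos hs0
    (by linarith) htκ hvol' (by positivity) _ hB).trans ?_
  gcongr
  · exact Metric.self_subset_thickening ((half_pos hδ).trans ha) B
  · have : (k : ℝ) * t ≤ k * s := by gcongr
    nlinarith
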